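/- arXiv:1308.1892 — 2 statements merged into one kernel-verified Lean document; each statement's English description precedes it below -/
import Mathlib

section
/- Let C be a quasiminimal pregeometry class and H, H' ∈ C be of the same uncountable cardinality. Then H ≡_{ω₁,ω} H'; equivalently, the empty map is a partial σ-embedding between H and H'. -/
open FirstOrder FirstOrder.Language Set Cardinal



universe u u' v w

namespace QM

variable {L : FirstOrder.Language.{v, w}}

/-- Formulas of `L_{ω₁,ω}`: built from atomic formulas by negation, countable
conjunction (indexed by `ℕ`), and universal quantification; `α` is the type of free
variables and `n` counts the de Bruijn bound variables. Countable disjunctions and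
the existential quantifier are definable via negation. -/
inductive InfFormula (L : FirstOrder.Language.{v, w}) (α : Type u) : ℕ → Type (max u v w)
  | falsum {n : ℕ} : InfFormula L α n
  | equal {n : ℕ} (t₁ t₂ : L.Term (α ⊕ (Fin n))) : InfFormula L α n
  | rel {n l : ℕ} (R : L.Relations l) (ts : Fin l → L.Term (α ⊕ (Fin n))) : InfFormula L α n
  | not {n : ℕ} (φ : InfFormula L α n) : InfFormula L α n
  | iInf {n : ℕ} (φ : ℕ → InfFormula L α n) : InfFormula L α n
  | all {n : ℕ} (φ : InfFormula L α (n + 1)) : InfFormula L α n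

/-- Satisfaction of an `L_{ω₁,ω}`-formula in an `L`-structure `M`, given an
assignment `v` of the free variables and `xs` of the bound variables. -/
def InfFormula.Realize {M : Type u'} [L.Structure M] {α : Type u} :
    ∀ {n : ℕ}, InfFormula L α n → (α → M) → (Fin n → M) → Prop
  | _, .falsum, _, _ => False
  | _, .equal t₁ t₂, v, xs => t₁.realize (Sum.elim v xs) = t₂.realize (Sum.elim v xs)
  | _, .rel R ts, v, xs => Structure.RelMap R (fun i => (ts i).realize (Sum.elim v xs))
  | _, .not φ, v, xs => ¬ φ.Realize v xs
  | _, .iInf φ, v, xs => ∀ i : ℕ, (φ i).Realize v xs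
  | _, .all φ, v, xs => ∀ x : M, φ.Realize v (Fin.snoc xs x)

/-- An `L_{ω₁,ω}`-sentence. -/
abbrev InfSentence (L : FirstOrder.Language.{v, w}) := InfFormula L PEmpty 0

/-- Satisfaction of an `L_{ω₁,ω}`-sentence. -/
def InfSentence.RealizeS (M : Type u') [L.Structure M] (φ : InfSentence L) : Prop :=
  InfFormula.Realize (M := M) φ PEmpty.elim (fun i => i.elim0)

/-- Satisfaction of an `L_{ω₁,ω}`-formula with parameters from the set `A`
and `m` free variables `v̄`, at the tuple `v`. -/
def InfFormula.RealizeP {M : Type u'} [L.Structure M] {A : Set M} {m : ℕ}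
    (φ : InfFormula L (↥A ⊕ Fin m) 0) (v : Fin m → M) : Prop :=
  φ.Realize (Sum.elim Subtype.val v) (fun i => i.elim0)

/-- The domain of a partial map, viewed as a graph (set of pairs). -/
def pdom {H : Type*} {H' : Type*} (p : Set (H × H')) : Set H := Prod.fst '' p

/-- The image of a partial map, viewed as a graph (set of pairs). -/
def pimg {H : Type*} {H' : Type*} (p : Set (H × H')) : Set H' := Prod.snd '' p

/-- The image of a set `X` under a partial map given as a graph. -/
def pimage {H : Type*} {H' : Type*} (p : Set (H × H')) (X : Set H) : Set H' :=
  {b | ∃ a ∈ X, (a, b) ∈ p}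

/-- A partial map (given as its graph `p`) is a partial embedding if it preserves
quantifier-free first-order formulas. (This forces `p` to be the graph of an
injective partial function.) -/
def IsPartialEmbedding {H : Type u} {H' : Type u} [L.Structure H] [L.Structure H']
    (p : Set (H × H')) : Prop :=
  ∀ (n : ℕ) (φ : L.Formula (Fin n)), BoundedFormula.IsQF φ →
    ∀ (a : Fin n → H) (b : Fin n → H'), (∀ i, (a i, b i) ∈ p) →
      (φ.Realize a ↔ φ.Realize b)

/-- A partial map is a σ-embedding if it is a partial embedding and preserves all
`L_{ω₁,ω}`-formulas with (possibly infinitely many) parameters from its domain;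
equivalently `⟨M, m⟩_{m ∈ dom p} ≡_{ω₁,ω} ⟨N, p(m)⟩_{m ∈ dom p}`. -/
def IsSigmaEmbedding {H : Type u} {H' : Type u} [L.Structure H] [L.Structure H']
    (p : Set (H × H')) : Prop :=
  IsPartialEmbedding (L := L) p ∧
    ∀ (φ : InfFormula L (↥(pdom p)) 0) (b : ↥(pdom p) → H'),
      (∀ x : ↥(pdom p), ((x : H), b x) ∈ p) →
        (φ.Realize Subtype.val (fun i => i.elim0) ↔ φ.Realize b (fun i => i.elim0))

/-- A pregeometry (combinatorial geometry) on a set. -/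
structure IsPregeometry {α : Type*} (cl : Set α → Set α) : Prop where
  subset_cl : ∀ X, X ⊆ cl X
  mono : ∀ ⦃X Y : Set α⦄, X ⊆ Y → cl X ⊆ cl Y
  idem : ∀ X, cl (cl X) = cl X
  finChar : ∀ (X : Set α) (y : α), y ∈ cl X → ∃ F : Finset α, ↑F ⊆ X ∧ y ∈ cl ↑F
  exchange : ∀ (X : Set α) (a b : α), a ∈ cl (X ∪ {b}) → a ∉ cl X → b ∈ cl (X ∪ {a})

/-- A pair `⟨H, cl_H⟩` of an `L`-structure and a closure operator on it. -/
structure QMObj (L : FirstOrder.Language.{v, w}) where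
  carrier : Type u
  [str : L.Structure carrier]
  cl : Set carrier → Set carrier

attribute [instance] QMObj.str

/-- `G` is countable and closed, or empty. -/
def CCOE (H : QMObj.{u} L) (G : Set H.carrier) : Prop :=
  (G.Countable ∧ H.cl G = G) ∨ G = ∅

/-- The axioms for a class of pairs `⟨H, cl_H⟩` to be a quasiminimal pregeometry class. -/
structure IsQMClass (C : Set (QMObj.{u} L)) : Prop where
  /-- Closure under isomorphisms, transporting the closure operator. -/
  iso_closed : ∀ H ∈ C, ∀ (N : Type u) [_iN : L.Structure N] (f : H.carrier ≃[L] N),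
      (⟨N, fun X => f '' (H.cl (f ⁻¹' X))⟩ : QMObj L) ∈ C
  /-- Any two members satisfy the same quantifier-free sentences. -/
  qf_theory : ∀ H ∈ C, ∀ H' ∈ C, ∀ (φ : L.Sentence), BoundedFormula.IsQF φ →
      (H.carrier ⊨ φ ↔ H'.carrier ⊨ φ)
  /-- Each `cl_H` is a pregeometry. -/
  pregeom : ∀ H ∈ C, IsPregeometry H.cl
  /-- The closure of a finite set is countable. -/
  cl_finite_countable : ∀ H ∈ C, ∀ X : Set H.carrier, X.Finite → (H.cl X).Countable
  /-- The closure of any set is (the underlying set of) a substructure which, with the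
  restricted closure operator, is again a member of the class. -/
  cl_mem : ∀ H ∈ C, ∀ X : Set H.carrier, ∃ S : L.Substructure H.carrier,
      (S : Set H.carrier) = H.cl X ∧
      (⟨↥S, fun Y => Subtype.val ⁻¹' (H.cl (Subtype.val '' Y))⟩ : QMObj L) ∈ C
  /-- Partial embeddings preserve and reflect the closure relation. -/
  cl_embedding : ∀ H ∈ C, ∀ H' ∈ C, ∀ (p : Set (H.carrier × H'.carrier)),
      IsPartialEmbedding (L := L) p → ∀ X ⊆ pdom p, ∀ (y : H.carrier) (y' : H'.carrier),
        (y, y') ∈ p → (y ∈ H.cl X ↔ y' ∈ H'.cl (pimage p X))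
  /-- ℵ₀-homogeneity over countable closed models, part (i): an isomorphism between
  countable closed (or empty) sets extends by any pair of independent points. -/
  homogeneity₁ : ∀ H ∈ C, ∀ H' ∈ C, ∀ (g : Set (H.carrier × H'.carrier)),
      CCOE H (pdom g) → CCOE H' (pimg g) → IsPartialEmbedding (L := L) g →
      ∀ (x : H.carrier) (x' : H'.carrier), x ∉ H.cl (pdom g) → x' ∉ H'.cl (pimg g) →
        IsPartialEmbedding (L := L) (g ∪ {(x, x')})
  /-- ℵ₀-homogeneity over countable closed models, part (ii). -/
  homogeneity₂ : ∀ H ∈ C, ∀ H' ∈ C, ∀ (g f : Set (H.carrier × H'.carrier)),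
      CCOE H (pdom g) → CCOE H' (pimg g) → IsPartialEmbedding (L := L) g →
      (pdom f).Finite → IsPartialEmbedding (L := L) (g ∪ f) →
      ∀ y ∈ H.cl (pdom f ∪ pdom g), ∃ y' : H'.carrier,
        IsPartialEmbedding (L := L) (g ∪ f ∪ {(y, y')})


/-- `p` is a σ-type over `A` in `m` variables: every countable subset of `p` is
consistent with the structure, i.e. simultaneously satisfiable. -/
def IsSigmaType {M : Type u'} [L.Structure M] {A : Set M} {m : ℕ}
    (p : Set (InfFormula L (↥A ⊕ Fin m) 0)) : Prop :=
  ∀ Φ ⊆ p, Φ.Countable → ∃ v : Fin m → M, ∀ φ ∈ Φ, φ.RealizeP v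

/-- A σ-type `p` is isolated if there is a consistent `L_{ω₁,ω}`-formula `ψ(x̄)`
(possibly with parameters from `M`) such that `ψ` implies every formula of `p`. -/
def IsIsolated {M : Type u'} [L.Structure M] {A : Set M} {m : ℕ}
    (p : Set (InfFormula L (↥A ⊕ Fin m) 0)) : Prop :=
  ∃ ψ : InfFormula L (M ⊕ Fin m) 0,
    (∃ v : Fin m → M, ψ.Realize (Sum.elim id v) (fun i => i.elim0)) ∧
    ∀ φ ∈ p, ∀ v : Fin m → M, ψ.Realize (Sum.elim id v) (fun i => i.elim0) → φ.RealizeP v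

/-- A σ-type `p` is realised if some tuple satisfies every formula of `p`. -/
def IsRealized {M : Type u'} [L.Structure M] {A : Set M} {m : ℕ}
    (p : Set (InfFormula L (↥A ⊕ Fin m) 0)) : Prop :=
  ∃ v : Fin m → M, ∀ φ ∈ p, φ.RealizeP v

/-- `B` is an independent subset of the pregeometry `⟨H, cl_H⟩`. -/
def IsIndep (H : QMObj.{u} L) (B : Set H.carrier) : Prop :=
  ∀ x ∈ B, x ∉ H.cl (B \ {x})

/-- `B` is a basis of the pregeometry `⟨H, cl_H⟩`: a maximal independent subset. -/
def IsBasis (H : QMObj.{u} L) (B : Set H.carrier) : Prop :=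
  IsIndep H B ∧ ∀ B' : Set H.carrier, B ⊆ B' → IsIndep H B' → B' = B

/-- The model-theoretic algebraic closure of `X` in `M`: the set of elements
satisfying some first-order formula with parameters in `X` having finitely many
solutions. -/
def aclS (L : FirstOrder.Language.{v, w}) (M : Type u) [L.Structure M] (X : Set M) :
    Set M :=
  {y | ∃ (n : ℕ) (φ : L.BoundedFormula (Fin n) 1) (v : Fin n → M),
    (∀ i, v i ∈ X) ∧ φ.Realize v ![y] ∧ {z : M | φ.Realize v ![z]}.Finite}


section Aux

theorem IsPartialEmbedding.subset {H H' : Type u} [L.Structure H] [L.Structure H']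
    {p q : Set (H × H')} (hq : IsPartialEmbedding (L := L) q) (h : p ⊆ q) :
    IsPartialEmbedding (L := L) p :=
  fun n φ hφ a b hab => hq n φ hφ a b fun i => h (hab i)

/-- The inverse graph. -/
def pinv {H H' : Type*} (p : Set (H × H')) : Set (H' × H) := {q | q.swap ∈ p}

theorem pdom_pinv {H H' : Type*} (p : Set (H × H')) : pdom (pinv p) = pimg p := by
  ext x; simp [pdom, pimg, pinv]

theorem pimg_pinv {H H' : Type*} (p : Set (H × H')) : pimg (pinv p) = pdom p := by
  ext x; simp [pdom, pimg, pinv]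

theorem pinv_pinv {H H' : Type*} (p : Set (H × H')) : pinv (pinv p) = p := by
  ext x; simp [pinv]

theorem IsPartialEmbedding.pinv {H H' : Type u} [L.Structure H] [L.Structure H']
    {p : Set (H × H')} (hp : IsPartialEmbedding (L := L) p) :
    IsPartialEmbedding (L := L) (pinv p) :=
  fun n φ hφ a b hab => (hp n φ hφ b a fun i => hab i).symm

theorem IsPartialEmbedding.fun_eq {H H' : Type u} [L.Structure H] [L.Structure H']
    {p : Set (H × H')} (hp : IsPartialEmbedding (L := L) p) {x : H} {y z : H'}
    (h1 : (x, y) ∈ p) (h2 : (x, z) ∈ p) : y = z := by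
  have := hp 2 (Term.equal (var 0) (var 1)) (BoundedFormula.IsAtomic.equal _ _).isQF
    ![x, x] ![y, z] (by intro i; fin_cases i <;> simpa)
  simpa [Formula.realize_equal] using this

theorem empty_pe {C : Set (QMObj.{u} L)} (hC : IsQMClass C) {H H' : QMObj.{u} L} (hH : H ∈ C)
    (hH' : H' ∈ C) : IsPartialEmbedding (L := L) (∅ : Set (H.carrier × H'.carrier)) := by
  intro n φ hφ a b hab
  have hn : IsEmpty (Fin n) := ⟨fun i => hab i⟩
  have := hC.qf_theory H hH H' hH' (Formula.relabel (fun i => hn.elim i) φ)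
    (BoundedFormula.IsQF.relabel hφ _)
  simp only [Sentence.Realize, Formula.realize_relabel] at this
  convert this

theorem ext_step {C : Set (QMObj.{u} L)} (hC : IsQMClass C) {H H' : QMObj.{u} L} (hH : H ∈ C)
    (hH' : H' ∈ C) {f h : Set (H.carrier × H'.carrier)} (hfin : h.Finite)
    (hh : IsPartialEmbedding (L := L) h) (hfh : f ⊆ h)
    (y : H.carrier) (hy : y ∈ H.cl (pdom f)) :
    ∃ y', IsPartialEmbedding (L := L) (h ∪ {(y, y')}) ∧ y' ∈ H'.cl (pimg f) := by
  have hmono : pdom f ⊆ pdom h ∪ pdom (∅ : Set (H.carrier × H'.carrier)) :=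
    (Set.image_mono hfh).trans Set.subset_union_left
  obtain ⟨y', hy'⟩ := hC.homogeneity₂ H hH H' hH' ∅ h (Or.inr (by simp [pdom]))
    (Or.inr (by simp [pimg])) (empty_pe hC hH hH') (hfin.image _) (by simpa using hh) y
    ((hC.pregeom H hH).mono hmono hy)
  rw [Set.empty_union] at hy'
  refine ⟨y', hy', ?_⟩
  have := (hC.cl_embedding H hH H' hH' _ hy' (pdom f)
    (Set.image_mono (hfh.trans Set.subset_union_left)) y y' (Or.inr rfl)).1 hy
  refine (hC.pregeom H' hH').mono ?_ this
  rintro b ⟨a, ⟨⟨a', c⟩, hac, rfl⟩, hab⟩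
  have := hy'.fun_eq hab (Or.inl (hfh hac))
  subst this
  exact ⟨_, hac, rfl⟩

theorem ext_closure {C : Set (QMObj.{u} L)} (hC : IsQMClass C) {H H' : QMObj.{u} L} (hH : H ∈ C)
    (hH' : H' ∈ C) {f : Set (H.carrier × H'.carrier)} (hfin : f.Finite)
    (hf : IsPartialEmbedding (L := L) f) :
    ∃ g, f ⊆ g ∧ IsPartialEmbedding (L := L) g ∧ pdom g = H.cl (pdom f) ∧
      pimg g = H'.cl (pimg f) := by
  let P := {h : Set (H.carrier × H'.carrier) // h.Finite ∧ IsPartialEmbedding (L := L) h ∧ f ⊆ h ∧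
    pdom h ⊆ H.cl (pdom f) ∧ pimg h ⊆ H'.cl (pimg f)}
  let p0 : P := ⟨f, hfin, hf, subset_rfl, (hC.pregeom H hH).subset_cl _,
    (hC.pregeom H' hH').subset_cl _⟩
  have c1 : Countable (H.cl (pdom f)) := (hC.cl_finite_countable H hH _ (hfin.image _)).to_subtype
  have c2 : Countable (H'.cl (pimg f)) :=
    (hC.cl_finite_countable H' hH' _ (hfin.image _)).to_subtype
  have key : ∀ (h : P) (y : H.carrier) (y' : H'.carrier), y ∈ H.cl (pdom f) →
      y' ∈ H'.cl (pimg f) → IsPartialEmbedding (L := L) (h.1 ∪ {(y, y')}) →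
      ∃ k : P, h ≤ k ∧ (y, y') ∈ k.1 := by
    intro h y y' hy hy' hk
    refine ⟨⟨h.1 ∪ {(y, y')}, h.2.1.union (Set.finite_singleton _), hk,
      h.2.2.2.1.trans Set.subset_union_left, ?_, ?_⟩, ?_, Or.inr rfl⟩
    · rintro _ ⟨z, hz | rfl, rfl⟩
      · exact h.2.2.2.2.1 ⟨z, hz, rfl⟩
      · exact hy
    · rintro _ ⟨z, hz | rfl, rfl⟩
      · exact h.2.2.2.2.2 ⟨z, hz, rfl⟩
      · exact hy'
    · exact (Set.subset_union_left : h.1 ⊆ h.1 ∪ {(y, y')})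
  let D : (H.cl (pdom f) ⊕ H'.cl (pimg f)) → Order.Cofinal P := fun s => match s with
    | Sum.inl y => ⟨{h : P | (y : H.carrier) ∈ pdom h.1}, by
        intro h
        obtain ⟨y', h1, h2⟩ := ext_step hC hH hH' h.2.1 h.2.2.1 h.2.2.2.1 y y.2
        obtain ⟨k, hk, hm⟩ := key h y y' y.2 h2 h1
        exact ⟨k, ⟨_, hm, rfl⟩, hk⟩⟩
    | Sum.inr y' => ⟨{h : P | (y' : H'.carrier) ∈ pimg h.1}, by
        intro h
        obtain ⟨y, h1, h2⟩ := ext_step (f := pinv f) (h := pinv h.1) hC hH' hH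
          (h.2.1.preimage Prod.swap_injective.injOn) h.2.2.1.pinv
          (fun q hq => h.2.2.2.1 hq) y' (by rw [pdom_pinv]; exact y'.2)
        rw [pimg_pinv] at h2
        obtain ⟨k, hk, hm⟩ := key h y y' h2 y'.2 (h1.pinv.subset (by
          rintro q (hq | rfl)
          · exact Or.inl hq
          · exact Or.inr rfl))
        exact ⟨k, ⟨_, hm, rfl⟩, hk⟩⟩
  let _ : Encodable (H.cl (pdom f) ⊕ H'.cl (pimg f)) := Encodable.ofCountable _
  let I := Order.idealOfCofinals p0 D
  have hdir : ∀ n (a : Fin n → H.carrier) (b : Fin n → H'.carrier),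
      (∀ i, ∃ h ∈ I, (a i, b i) ∈ h.1) → ∃ h ∈ I, ∀ i, (a i, b i) ∈ h.1 := by
    intro n a b hab
    induction n with
    | zero => exact ⟨p0, Order.mem_idealOfCofinals _ _, fun i => i.elim0⟩
    | succ n ih =>
      obtain ⟨h, hI, hm⟩ := ih (a ∘ Fin.castSucc) (b ∘ Fin.castSucc) fun i => hab i.castSucc
      obtain ⟨h', hI', hm'⟩ := hab (Fin.last n)
      obtain ⟨k, hk, hl, hl'⟩ := I.directed h hI h' hI'
      refine ⟨k, hk, fun i => ?_⟩
      refine Fin.lastCases ?_ (fun i => ?_) i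
      · exact hl' hm'
      · exact hl (hm i)
  refine ⟨{q | ∃ h ∈ I, q ∈ h.1}, fun q hq => ⟨p0, Order.mem_idealOfCofinals _ _, hq⟩, ?_, ?_, ?_⟩
  · intro n φ hφ a b hab
    obtain ⟨h, hI, hm⟩ := hdir n a b hab
    exact h.2.2.1 n φ hφ a b hm
  · apply Set.Subset.antisymm
    · rintro _ ⟨q, ⟨h, hI, hq⟩, rfl⟩
      exact h.2.2.2.2.1 ⟨q, hq, rfl⟩
    · intro y hy
      obtain ⟨h, ⟨q, hq, hqy⟩, hI⟩ := Order.cofinal_meets_idealOfCofinals p0 D (Sum.inl ⟨y, hy⟩)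
      exact ⟨q, ⟨h, hI, hq⟩, hqy⟩
  · apply Set.Subset.antisymm
    · rintro _ ⟨q, ⟨h, hI, hq⟩, rfl⟩
      exact h.2.2.2.2.2 ⟨q, hq, rfl⟩
    · intro y hy
      obtain ⟨h, ⟨q, hq, hqy⟩, hI⟩ := Order.cofinal_meets_idealOfCofinals p0 D (Sum.inr ⟨y, hy⟩)
      exact ⟨q, ⟨h, hI, hq⟩, hqy⟩

theorem forth {C : Set (QMObj.{u} L)} (hC : IsQMClass C) {H H' : QMObj.{u} L} (hH : H ∈ C)
    (hH' : H' ∈ C) [hu : Uncountable H'.carrier] {f : Set (H.carrier × H'.carrier)}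
    (hfin : f.Finite) (hf : IsPartialEmbedding (L := L) f) (x : H.carrier) :
    ∃ x', IsPartialEmbedding (L := L) (f ∪ {(x, x')}) := by
  by_cases hx : x ∈ H.cl (pdom f)
  · obtain ⟨x', h, -⟩ := ext_step hC hH hH' hfin hf subset_rfl x hx
    exact ⟨x', h⟩
  · obtain ⟨g, hfg, hg, h1, h2⟩ := ext_closure hC hH hH' hfin hf
    have c1 := hC.cl_finite_countable H hH _ (hfin.image Prod.fst)
    have c2 := hC.cl_finite_countable H' hH' _ (hfin.image Prod.snd)
    obtain ⟨x', hx'⟩ : ∃ x', x' ∉ H'.cl (pimg f) := by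
      by_contra! hcon
      exact Set.not_countable_univ (c2.mono fun z _ => hcon z)
    have i1 := (hC.pregeom H hH).idem (pdom f)
    have i2 := (hC.pregeom H' hH').idem (pimg f)
    refine ⟨x', (hC.homogeneity₁ H hH H' hH' g (Or.inl ?_) (Or.inl ?_) hg x x' ?_ ?_).subset
      (Set.union_subset_union_left _ hfg)⟩
    · rw [h1]; exact ⟨c1, i1⟩
    · rw [h2]; exact ⟨c2, i2⟩
    · rwa [h1, i1]
    · rwa [h2, i2]

theorem back_forth {C : Set (QMObj.{u} L)} (hC : IsQMClass C) {H H' : QMObj.{u} L} (hH : H ∈ C)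
    (hH' : H' ∈ C) [Uncountable H.carrier] [Uncountable H'.carrier] {α : Type u'} [IsEmpty α]
    (v : α → H.carrier) (v' : α → H'.carrier) {n : ℕ} (φ : InfFormula L α n) :
    ∀ (f : Set (H.carrier × H'.carrier)), f.Finite → IsPartialEmbedding (L := L) f →
      ∀ (xs : Fin n → H.carrier) (xs' : Fin n → H'.carrier), (∀ i, (xs i, xs' i) ∈ f) →
        (φ.Realize v xs ↔ φ.Realize v' xs') := by
  have aux : ∀ {M : Type u} (n : ℕ) (v : α → M) (xs : Fin n → M),
      Sum.elim v xs = xs ∘ (Sum.elim isEmptyElim id : α ⊕ Fin n → Fin n) := by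
    intro M n v xs
    ext (a | i)
    · exact isEmptyElim a
    · rfl
  induction φ with
  | falsum => intros; rfl
  | @equal n t₁ t₂ =>
    intro f _ hf xs xs' hxs
    have := hf n (Term.equal (t₁.relabel (Sum.elim isEmptyElim id))
      (t₂.relabel (Sum.elim isEmptyElim id))) (BoundedFormula.IsAtomic.equal _ _).isQF xs xs' hxs
    simpa only [Formula.realize_equal, Term.realize_relabel, InfFormula.Realize, aux] using this
  | @rel n l R ts =>
    intro f _ hf xs xs' hxs
    have := hf n (R.formula fun i => (ts i).relabel (Sum.elim isEmptyElim id))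
      (BoundedFormula.IsAtomic.rel _ _).isQF xs xs' hxs
    simpa only [Formula.realize_rel, Term.realize_relabel, InfFormula.Realize, aux] using this
  | not φ ih =>
    intro f h1 h2 xs xs' h3
    simp only [InfFormula.Realize, ih f h1 h2 xs xs' h3]
  | iInf φ ih =>
    intro f h1 h2 xs xs' h3
    simp only [InfFormula.Realize, fun i => ih i f h1 h2 xs xs' h3]
  | @all n φ ih =>
    intro f h1 h2 xs xs' h3
    have hs : ∀ x x' (i : Fin (n + 1)),
        ((Fin.snoc xs x : Fin (n + 1) → H.carrier) i, (Fin.snoc xs' x' : Fin (n + 1) → H'.carrier) i)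
          ∈ f ∪ {(x, x')} := by
      intro x x' i
      refine Fin.lastCases ?_ (fun i => ?_) i
      · simp
      · simpa using Or.inr (h3 i)
    simp only [InfFormula.Realize]
    constructor
    · intro h x'
      obtain ⟨x, hx⟩ := forth hC hH' hH (f := pinv f)
        (h1.preimage Prod.swap_injective.injOn) h2.pinv x'
      refine (ih (f ∪ {(x, x')}) (h1.union (Set.finite_singleton _)) (hx.pinv.subset ?_) _ _
        (hs x x')).1 (h x)
      rintro q (hq | rfl)
      · exact Or.inl hq
      · exact Or.inr rfl
    · intro h x
      obtain ⟨x', hx⟩ := forth hC hH hH' h1 h2 x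
      exact (ih (f ∪ {(x, x')}) (h1.union (Set.finite_singleton _)) hx _ _ (hs x x')).2 (h x')

end Aux

/-- If `H, H' ∈ C` have the same uncountable cardinality then
`H ≡_{ω₁,ω} H'`; equivalently the empty map is a partial σ-embedding. -/
theorem statement_8 {L : FirstOrder.Language.{v, w}} (C : Set (QMObj.{u} L))
    (hC : IsQMClass C) (H : QMObj.{u} L) (hH : H ∈ C) (H' : QMObj.{u} L) (hH' : H' ∈ C)
    (hcard : Cardinal.mk H.carrier = Cardinal.mk H'.carrier)
    (hunc : Uncountable H.carrier) :
    (∀ φ : InfSentence L, InfSentence.RealizeS H.carrier φ ↔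
        InfSentence.RealizeS H'.carrier φ) ∧
      IsSigmaEmbedding (L := L) (∅ : Set (H.carrier × H'.carrier)) := by
  have hunc' : Uncountable H'.carrier := by
    rw [← Cardinal.aleph0_lt_mk_iff] at hunc ⊢
    rwa [← hcard]
  have he := empty_pe hC hH hH'
  refine ⟨fun φ => ?_, he, fun φ b _ => ?_⟩
  · exact back_forth hC hH hH' _ _ φ ∅ Set.finite_empty he _ _ (fun i => i.elim0)
  · have : IsEmpty (pdom (∅ : Set (H.carrier × H'.carrier))) := by
      simp [pdom]
    exact back_forth hC hH hH' _ _ φ ∅ Set.finite_empty he _ _ (fun i => i.elim0)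

end QM
end

section
/- Let C be a quasiminimal pregeometry class, H, H' ∈ C uncountable, and g : H ⇀ H' a partial σ-embedding with X = dom(g) and X' = img(g) countable. Then g extends to a partial σ-embedding ĝ : H ⇀ H' with dom(ĝ) = cl(X) and img(ĝ) = cl(X'); in particular ĝ restricts to an isomorphism of cl(X) onto cl(X'). -/
open FirstOrder FirstOrder.Language Set Cardinal



universe u u' v w

namespace QM

variable {L : FirstOrder.Language.{v, w}}

namespace InfFormula

/-- Renaming of the free variables. -/
def relabel {α β : Type u} (f : α → β) : ∀ {n : ℕ}, InfFormula L α n → InfFormula L β n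
  | _, .falsum => .falsum
  | _, .equal t₁ t₂ => .equal (t₁.relabel (Sum.map f id)) (t₂.relabel (Sum.map f id))
  | _, .rel R ts => .rel R (fun i => (ts i).relabel (Sum.map f id))
  | _, .not φ => .not (relabel f φ)
  | _, .iInf φ => .iInf (fun i => relabel f (φ i))
  | _, .all φ => .all (relabel f φ)

theorem realize_relabel {α β : Type u} {M : Type u'} [L.Structure M] (f : α → β) {n : ℕ}
    (φ : InfFormula L α n) (v : β → M) (xs : Fin n → M) :
    (relabel f φ).Realize v xs ↔ φ.Realize (v ∘ f) xs := by
  have key : ∀ {n : ℕ} (xs : Fin n → M), Sum.elim v xs ∘ Sum.map f id = Sum.elim (v ∘ f) xs := by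
    intro n xs
    simp [Sum.elim_comp_map]
  induction φ with
  | falsum => exact Iff.rfl
  | equal t₁ t₂ => simp only [relabel, Realize, Term.realize_relabel, key]
  | rel R ts => simp only [relabel, Realize, Term.realize_relabel, key]
  | not φ ih => simp only [relabel, Realize, ih]
  | iInf φ ih => simp only [relabel, Realize, ih]
  | all φ ih => simp only [relabel, Realize, ih]

/-- The variable renaming which turns the variable `none` into the first bound variable. -/
def absVar {α : Type u} {n : ℕ} : (Option α) ⊕ (Fin n) → α ⊕ (Fin (n + 1))
  | .inl none => .inr 0
  | .inl (some i) => .inl i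
  | .inr j => .inr j.succ

/-- Turn the variable `none` into the first bound variable. -/
def absorb {α : Type u} : ∀ {n : ℕ}, InfFormula L (Option α) n → InfFormula L α (n + 1)
  | _, .falsum => .falsum
  | _, .equal t₁ t₂ => .equal (t₁.relabel absVar) (t₂.relabel absVar)
  | _, .rel R ts => .rel R (fun i => (ts i).relabel absVar)
  | _, .not φ => .not (absorb φ)
  | _, .iInf φ => .iInf (fun i => absorb (φ i))
  | _, .all φ => .all (absorb φ)

/-- Extend a family by one element. -/
def ext1 {α : Type u} {M : Type u'} (y : M) (v : α → M) : Option α → M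
  | none => y
  | some i => v i

theorem realize_absorb {α : Type u} {M : Type u'} [L.Structure M] {n : ℕ}
    (φ : InfFormula L (Option α) n) (v : α → M) (y : M) (xs : Fin n → M) :
    (absorb φ).Realize v (Fin.cons y xs : Fin (n + 1) → M) ↔ φ.Realize (ext1 y v) xs := by
  have key : ∀ {n : ℕ} (xs : Fin n → M),
      Sum.elim v (Fin.cons y xs : Fin (n + 1) → M) ∘ absVar = Sum.elim (ext1 y v) xs := by
    intro n xs
    funext i
    rcases i with (_ | i) | j <;> simp [absVar, ext1]
  induction φ with
  | falsum => exact Iff.rfl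
  | equal t₁ t₂ => simp only [absorb, Realize, Term.realize_relabel, key]
  | rel R ts => simp only [absorb, Realize, Term.realize_relabel, key]
  | not φ ih => simp only [absorb, Realize, ih]
  | iInf φ ih => simp only [absorb, Realize, ih]
  | all φ ih =>
    simp only [absorb, Realize]
    refine forall_congr' fun x => ?_
    rw [← Fin.cons_snoc_eq_snoc_cons]
    exact ih _

/-- Binary conjunction. -/
def and {α : Type u} {n : ℕ} (φ ψ : InfFormula L α n) : InfFormula L α n :=
  .iInf (fun i => if i = 0 then φ else ψ)

theorem realize_and {α : Type u} {M : Type u'} [L.Structure M] {n : ℕ}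
    (φ ψ : InfFormula L α n) (v : α → M) (xs : Fin n → M) :
    (and φ ψ).Realize v xs ↔ φ.Realize v xs ∧ ψ.Realize v xs := by
  simp only [and, Realize]
  constructor
  · intro h
    exact ⟨by simpa using h 0, by simpa using h 1⟩
  · rintro ⟨h1, h2⟩ i
    by_cases hi : i = 0 <;> simp [hi, h1, h2]

/-- First-order formulas as infinitary formulas. -/
def ofBounded {α : Type u} : ∀ {n : ℕ}, L.BoundedFormula α n → InfFormula L α n
  | _, .falsum => .falsum
  | _, .equal t₁ t₂ => .equal t₁ t₂
  | _, .rel R ts => .rel R ts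
  | _, .imp φ ψ => .not (and (ofBounded φ) (.not (ofBounded ψ)))
  | _, .all φ => .all (ofBounded φ)

theorem realize_ofBounded {α : Type u} {M : Type u'} [L.Structure M] {n : ℕ}
    (φ : L.BoundedFormula α n) (v : α → M) (xs : Fin n → M) :
    (ofBounded φ).Realize v xs ↔ φ.Realize v xs := by
  induction φ with
  | falsum => exact Iff.rfl
  | equal t₁ t₂ => exact Iff.rfl
  | rel R ts => exact Iff.rfl
  | imp φ ψ ih1 ih2 =>
    simp only [ofBounded, Realize, realize_and, ih1, ih2, BoundedFormula.realize_imp]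
    tauto
  | all φ ih => simp only [ofBounded, Realize, ih, BoundedFormula.realize_all]

end InfFormula

open InfFormula

/-- Two families have the same infinitary type. -/
def SigEq (L : FirstOrder.Language.{v, w}) {ι : Type u} {M N : Type u'} [L.Structure M]
    [L.Structure N] (a : ι → M) (b : ι → N) : Prop :=
  ∀ φ : InfFormula L ι 0, φ.Realize a (fun i => i.elim0) ↔ φ.Realize b (fun i => i.elim0)

section families

variable {M N : Type u} [L.Structure M] [L.Structure N]

theorem SigEq.symm {ι : Type u} {a : ι → M} {b : ι → N} (h : SigEq L a b) : SigEq L b a :=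
  fun φ => (h φ).symm

theorem SigEq.comp {ι κ : Type u} {a : ι → M} {b : ι → N} (h : SigEq L a b) (f : κ → ι) :
    SigEq L (a ∘ f) (b ∘ f) := by
  intro φ
  have := h (relabel f φ)
  rwa [realize_relabel, realize_relabel] at this

theorem sigEq_of_imp {ι : Type u} {a : ι → M} {b : ι → N}
    (h : ∀ φ : InfFormula L ι 0, φ.Realize a (fun i => i.elim0) →
      φ.Realize b (fun i => i.elim0)) : SigEq L a b := by
  intro φ
  refine ⟨h φ, fun hb => ?_⟩
  by_contra ha
  exact h (.not φ) ha hb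

theorem SigEq.isPartialEmbedding {ι : Type u} {a : ι → M} {b : ι → N} (h : SigEq L a b) :
    IsPartialEmbedding (L := L) (range fun i => (a i, b i)) := by
  intro n φ _ c d hcd
  choose e he using hcd
  have hc : c = a ∘ e := funext fun i => (congrArg Prod.fst (he i)).symm
  have hd : d = b ∘ e := funext fun i => (congrArg Prod.snd (he i)).symm
  have := h (ofBounded ((φ.relabel e : L.Formula ι)))
  rw [realize_ofBounded, realize_ofBounded] at this
  have h1 := @Formula.realize_relabel L M _ _ _ φ e a
  have h2 := @Formula.realize_relabel L N _ _ _ φ e b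
  rw [hc, hd, ← h1, ← h2]
  unfold Formula.Realize
  convert this using 2

theorem IsPartialEmbedding.mono {p q : Set (M × N)} (h : IsPartialEmbedding (L := L) q)
    (hpq : p ⊆ q) : IsPartialEmbedding (L := L) p :=
  fun n φ hφ a b hab => h n φ hφ a b fun i => hpq (hab i)

theorem IsPartialEmbedding.swap {p : Set (M × N)} (h : IsPartialEmbedding (L := L) p) :
    IsPartialEmbedding (L := L) (Prod.swap ⁻¹' p) :=
  fun n φ hφ a b hab => (h n φ hφ b a hab).symm

theorem pdom_swap {α β : Type*} (p : Set (α × β)) : pdom (Prod.swap ⁻¹' p) = pimg p := by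
  ext x; simp [pdom, pimg]

theorem pimg_swap {α β : Type*} (p : Set (α × β)) : pimg (Prod.swap ⁻¹' p) = pdom p := by
  ext x; simp [pdom, pimg]

theorem isPartialEmbedding_iUnion {p : ℕ → Set (M × N)} (hm : Monotone p)
    (h : ∀ n, IsPartialEmbedding (L := L) (p n)) : IsPartialEmbedding (L := L) (⋃ n, p n) := by
  intro n φ hφ a b hab
  have hab' : ∀ i, ∃ k, (a i, b i) ∈ p k := fun i => by simpa using hab i
  choose k hk using hab'
  exact h (Finset.univ.sup k) n φ hφ a b
    fun i => hm (Finset.le_sup (f := k) (Finset.mem_univ i)) (hk i)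

/-- Partial embeddings preserve finite systems of terms in atomic formulas. -/
theorem exists_finite_terms {γ : Type*} {l : ℕ} (ts : Fin l → L.Term γ) :
    ∃ (n : ℕ) (e : Fin n → γ) (ts' : Fin l → L.Term (Fin n)),
      ∀ i, (ts' i).relabel e = ts i := by
  classical
  let s : Finset γ := Finset.univ.biUnion fun i => (ts i).varFinset
  let e := s.equivFin
  have hs : ∀ i, (ts i).varFinset ⊆ s := fun i =>
    Finset.subset_biUnion_of_mem (fun i => (ts i).varFinset) (Finset.mem_univ i)
  refine ⟨s.card, fun j => (e.symm j : γ),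
    fun i => (ts i).restrictVar (fun x => e ⟨x.1, hs i x.2⟩), fun i => ?_⟩
  have : ∀ (t : L.Term γ) (ht : t.varFinset ⊆ s),
      (t.restrictVar (fun x => e ⟨x.1, ht x.2⟩)).relabel (fun j => (e.symm j : γ)) = t := by
    intro t
    induction t with
    | var x => intro ht; simp [Term.restrictVar, Term.relabel]
    | func f ts ih =>
      intro ht
      simp only [Term.restrictVar, Term.relabel]
      congr 1
      funext j
      exact ih j ((Finset.subset_biUnion_of_mem (fun i => (ts i).varFinset)
        (Finset.mem_univ j)).trans ht)
  exact this _ (hs i)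

theorem IsPartialEmbedding.rel {p : Set (M × N)} (h : IsPartialEmbedding (L := L) p)
    {γ : Type*} {l : ℕ} (R : L.Relations l) (ts : Fin l → L.Term γ) (a : γ → M) (b : γ → N)
    (hab : ∀ i, (a i, b i) ∈ p) :
    Structure.RelMap R (fun i => (ts i).realize a) ↔
      Structure.RelMap R (fun i => (ts i).realize b) := by
  obtain ⟨n, e, ts', hts⟩ := exists_finite_terms ts
  have := h n (R.formula ts') (BoundedFormula.IsAtomic.rel _ _).isQF (a ∘ e) (b ∘ e)
    (fun i => hab _)
  simp only [Formula.realize_rel] at this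
  simp only [← hts, Term.realize_relabel]
  exact this

theorem IsPartialEmbedding.eq {p : Set (M × N)} (h : IsPartialEmbedding (L := L) p)
    {γ : Type*} (t₁ t₂ : L.Term γ) (a : γ → M) (b : γ → N)
    (hab : ∀ i, (a i, b i) ∈ p) :
    t₁.realize a = t₂.realize a ↔ t₁.realize b = t₂.realize b := by
  obtain ⟨n, e, ts', hts⟩ := exists_finite_terms ![t₁, t₂]
  have := h n (Term.equal (ts' 0) (ts' 1)) (BoundedFormula.IsAtomic.equal _ _).isQF
    (a ∘ e) (b ∘ e) (fun i => hab _)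
  simp only [Formula.realize_equal] at this
  have h0 := hts 0
  have h1 := hts 1
  simp only [Matrix.cons_val_zero, Matrix.cons_val_one] at h0 h1
  rw [← h0, ← h1]
  simp only [Term.realize_relabel]
  exact this

theorem IsPartialEmbedding.eq_iff {p : Set (M × N)} (h : IsPartialEmbedding (L := L) p)
    {x y : M} {x' y' : N} (hx : (x, x') ∈ p) (hy : (y, y') ∈ p) : x = y ↔ x' = y' := by
  have := h.eq (Term.var 0 : L.Term (Fin 2)) (Term.var 1) ![x, y] ![x', y']
    (by intro i; fin_cases i <;> simpa)
  simpa using this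

/-- Back-and-forth systems preserve infinitary formulas. -/
theorem realize_iff_of_backForth (P : Set (M × N) → Prop)
    (hP : ∀ p, P p → IsPartialEmbedding (L := L) p)
    (forth : ∀ p, P p → ∀ y, ∃ y', P (p ∪ {(y, y')}))
    (back : ∀ p, P p → ∀ y', ∃ y, P (p ∪ {(y, y')}))
    {ι : Type u} {n : ℕ} (φ : InfFormula L ι n) (a : ι → M) (b : ι → N) :
    ∀ (p : Set (M × N)), P p → (∀ i, (a i, b i) ∈ p) → ∀ (xs : Fin n → M) (ys : Fin n → N),
      (∀ j, (xs j, ys j) ∈ p) → (φ.Realize a xs ↔ φ.Realize b ys) := by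
  have aux : ∀ {n : ℕ} (p : Set (M × N)), (∀ i, (a i, b i) ∈ p) →
      ∀ (xs : Fin n → M) (ys : Fin n → N), (∀ j, (xs j, ys j) ∈ p) →
      ∀ i, (Sum.elim a xs i, Sum.elim b ys i) ∈ p := by
    rintro n p hab xs ys hxy (i | j)
    · exact hab i
    · exact hxy j
  have aux2 : ∀ {n : ℕ} (p : Set (M × N)) (xs : Fin n → M) (ys : Fin n → N),
      (∀ j, (xs j, ys j) ∈ p) → ∀ x y,
      ∀ j, ((Fin.snoc xs x : Fin (n + 1) → M) j, (Fin.snoc ys y : Fin (n + 1) → N) j) ∈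
        p ∪ {(x, y)} := by
    intro n p xs ys hxy x y j
    refine Fin.lastCases ?_ (fun j => ?_) j
    · simp
    · simp only [Fin.snoc_castSucc]
      exact Or.inl (hxy j)
  induction φ with
  | falsum => intros; exact Iff.rfl
  | equal t₁ t₂ =>
    intro p hp hab xs ys hxy
    exact (hP p hp).eq t₁ t₂ _ _ (aux p hab xs ys hxy)
  | rel R ts =>
    intro p hp hab xs ys hxy
    exact (hP p hp).rel R ts _ _ (aux p hab xs ys hxy)
  | not φ ih =>
    intro p hp hab xs ys hxy
    exact not_congr (ih p hp hab xs ys hxy)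
  | iInf φ ih =>
    intro p hp hab xs ys hxy
    exact forall_congr' fun i => ih i p hp hab xs ys hxy
  | all φ ih =>
    intro p hp hab xs ys hxy
    constructor
    · intro h y
      obtain ⟨x, hx⟩ := back p hp y
      exact (ih _ hx (fun i => Or.inl (hab i)) _ _ (aux2 p xs ys hxy x y)).1 (h x)
    · intro h x
      obtain ⟨y, hy⟩ := forth p hp x
      exact (ih _ hy (fun i => Or.inl (hab i)) _ _ (aux2 p xs ys hxy x y)).2 (h y)

/-- σ-embeddings in terms of families. -/
theorem isSigmaEmbedding_iff (p : Set (M × N)) :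
    IsSigmaEmbedding (L := L) p ↔ SigEq L (fun i : ↥p => i.1.1) (fun i : ↥p => i.1.2) := by
  constructor
  · rintro ⟨h1, h2⟩
    have hb : ∀ x : ↥(pdom p), ∃ y, ((x : M), y) ∈ p := by
      rintro ⟨_, ⟨⟨x, y⟩, hxy, rfl⟩⟩
      exact ⟨y, hxy⟩
    choose b hb using hb
    have h3 : SigEq L (Subtype.val : ↥(pdom p) → M) b := fun φ => h2 φ b hb
    have h4 := h3.comp (fun i : ↥p => (⟨i.1.1, ⟨i.1, i.2, rfl⟩⟩ : ↥(pdom p)))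
    have h5 : (fun i : ↥p => i.1.2) =
        b ∘ (fun i : ↥p => (⟨i.1.1, ⟨i.1, i.2, rfl⟩⟩ : ↥(pdom p))) := by
      funext i
      exact (h1.eq_iff i.2 (hb ⟨i.1.1, ⟨i.1, i.2, rfl⟩⟩)).1 rfl
    rw [h5]
    exact h4
  · intro h
    refine ⟨?_, fun φ b hb => ?_⟩
    · refine h.isPartialEmbedding.mono ?_
      intro x hx
      exact ⟨⟨x, hx⟩, rfl⟩
    · exact h.comp (fun x : ↥(pdom p) => (⟨(x, b x), hb x⟩ : ↥p)) φ

end families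

/-- Countable back-and-forth construction. -/
theorem exists_chain {α β : Type u} (P : Set (α × β) → Prop) (A : Set α) (B : Set β)
    (hA : A.Countable) (hB : B.Countable)
    (forth : ∀ p, P p → ∀ a ∈ A, ∃ b, P (p ∪ {(a, b)}))
    (back : ∀ p, P p → ∀ b ∈ B, ∃ a, P (p ∪ {(a, b)}))
    (p₀ : Set (α × β)) (h₀ : P p₀) :
    ∃ p : ℕ → Set (α × β), p 0 = p₀ ∧ Monotone p ∧ (∀ n, P (p n)) ∧
      A ⊆ pdom (⋃ n, p n) ∧ B ⊆ pimg (⋃ n, p n) := by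
  have : Countable A := hA
  have : Countable B := hB
  let _ := Encodable.ofCountable A
  let _ := Encodable.ofCountable B
  have step : ∀ (n : ℕ) (p : {p // P p}), ∃ q : {p // P p}, p.1 ⊆ q.1 ∧
      (∀ a : A, Encodable.decode n = some a → (a : α) ∈ pdom q.1) ∧
      (∀ b : B, Encodable.decode n = some b → (b : β) ∈ pimg q.1) := by
    rintro n ⟨p, hp⟩
    have h1 : ∃ q, P q ∧ p ⊆ q ∧
        (∀ a : A, Encodable.decode n = some a → (a : α) ∈ pdom q) := by
      cases hd : (Encodable.decode n : Option A) with
      | none => exact ⟨p, hp, Subset.rfl, by simp⟩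
      | some a =>
        obtain ⟨b, hb⟩ := forth p hp a a.2
        refine ⟨_, hb, subset_union_left, ?_⟩
        rintro a' ha'
        obtain rfl : a = a' := by simpa using ha'
        exact ⟨(a, b), Or.inr rfl, rfl⟩
    obtain ⟨q, hq, hpq, hqa⟩ := h1
    cases hd : (Encodable.decode n : Option B) with
    | none => exact ⟨⟨q, hq⟩, hpq, hqa, by simp⟩
    | some b =>
      obtain ⟨a, ha⟩ := back q hq b b.2
      refine ⟨⟨_, ha⟩, hpq.trans subset_union_left, ?_, ?_⟩
      · intro a' ha'
        exact image_mono subset_union_left (hqa a' ha')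
      · rintro b' hb'
        obtain rfl : b = b' := by simpa using hb'
        exact ⟨(a, b), Or.inr rfl, rfl⟩
  choose next hn using step
  let p : ℕ → {p // P p} := fun n => Nat.rec ⟨p₀, h₀⟩ (fun n q => next n q) n
  have hp : ∀ n, p (n + 1) = next n (p n) := fun n => rfl
  refine ⟨fun n => (p n).1, rfl, monotone_nat_of_le_succ fun n => ?_, fun n => (p n).2, ?_, ?_⟩
  · rw [hp]; exact (hn n (p n)).1
  · intro a ha
    have := (hn (Encodable.encode (⟨a, ha⟩ : A)) (p (Encodable.encode (⟨a, ha⟩ : A)))).2.1 ⟨a, ha⟩ (Encodable.encodek _)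
    rw [← hp] at this
    exact image_mono (subset_iUnion (fun n => (p n).1) (Encodable.encode (⟨a, ha⟩ : A) + 1)) this
  · intro b hb
    have := (hn (Encodable.encode (⟨b, hb⟩ : B)) (p (Encodable.encode (⟨b, hb⟩ : B)))).2.2 ⟨b, hb⟩ (Encodable.encodek _)
    rw [← hp] at this
    exact image_mono (subset_iUnion (fun n => (p n).1) (Encodable.encode (⟨b, hb⟩ : B) + 1)) this

section qm

variable {C : Set (QMObj.{u} L)}

theorem cl_countable (hC : IsQMClass C) {H : QMObj.{u} L} (hH : H ∈ C) {X : Set H.carrier}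
    (hX : X.Countable) : (H.cl X).Countable := by
  have : H.cl X ⊆ ⋃ F ∈ {F : Set H.carrier | F.Finite ∧ F ⊆ X}, H.cl F := by
    intro y hy
    obtain ⟨F, hF, hyF⟩ := (hC.pregeom H hH).finChar X y hy
    exact mem_biUnion (show (F : Set H.carrier) ∈ {F : Set H.carrier | F.Finite ∧ F ⊆ X} from
      ⟨F.finite_toSet, hF⟩) hyF
  refine Countable.mono this ?_
  refine Countable.biUnion ?_ fun F hF => hC.cl_finite_countable H hH F hF.1
  exact countable_ofPred_finite_subset hX

/-- A partial embedding maps closure points to closure points. -/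
theorem cl_transfer (hC : IsQMClass C) {H H' : QMObj.{u} L} (hH : H ∈ C) (hH' : H' ∈ C)
    {p : Set (H.carrier × H'.carrier)} {y : H.carrier} {y' : H'.carrier}
    (hp : IsPartialEmbedding (L := L) (p ∪ {(y, y')})) :
    y ∈ H.cl (pdom p) ↔ y' ∈ H'.cl (pimg p) := by
  have h := hC.cl_embedding H hH H' hH' _ hp (pdom p) (image_mono subset_union_left) y y'
    (Or.inr rfl)
  have : pimage (p ∪ {(y, y')}) (pdom p) = pimg p := by
    ext b
    constructor
    · rintro ⟨_, ⟨⟨a, b'⟩, hab', rfl⟩, hab⟩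
      have := (hp.eq_iff hab (Or.inl hab')).1 rfl
      exact ⟨(a, b'), hab', this.symm⟩
    · rintro ⟨⟨a, b⟩, hab, rfl⟩
      exact ⟨a, ⟨(a, b), hab, rfl⟩, Or.inl hab⟩
  rwa [this] at h

theorem pdom_union {α β : Type*} (p q : Set (α × β)) : pdom (p ∪ q) = pdom p ∪ pdom q :=
  image_union _ _ _

theorem pimg_union {α β : Type*} (p q : Set (α × β)) : pimg (p ∪ q) = pimg p ∪ pimg q :=
  image_union _ _ _

theorem swap_union_singleton {α β : Type*} (p : Set (α × β)) (a : α) (b : β) :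
    Prod.swap ⁻¹' (p ∪ {(a, b)}) = Prod.swap ⁻¹' p ∪ {(b, a)} := by
  ext ⟨x, y⟩
  simp [Prod.ext_iff, and_comm]

/-- One-step extension in the closure, over a countable closed set. -/
theorem forth_cl (hC : IsQMClass C) {H H' : QMObj.{u} L} (hH : H ∈ C) (hH' : H' ∈ C)
    {g f : Set (H.carrier × H'.carrier)} (hg : CCOE H (pdom g)) (hg' : CCOE H' (pimg g))
    (hf : f.Finite) (hgf : IsPartialEmbedding (L := L) (g ∪ f)) {y : H.carrier}
    (hy : y ∈ H.cl (pdom (g ∪ f))) :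
    ∃ y', IsPartialEmbedding (L := L) (g ∪ f ∪ {(y, y')}) := by
  refine hC.homogeneity₂ H hH H' hH' g f hg hg' (hgf.mono subset_union_left)
    (hf.image _) hgf y ?_
  rwa [union_comm, ← pdom_union]

theorem back_cl (hC : IsQMClass C) {H H' : QMObj.{u} L} (hH : H ∈ C) (hH' : H' ∈ C)
    {g f : Set (H.carrier × H'.carrier)} (hg : CCOE H (pdom g)) (hg' : CCOE H' (pimg g))
    (hf : f.Finite) (hgf : IsPartialEmbedding (L := L) (g ∪ f)) {y' : H'.carrier}
    (hy : y' ∈ H'.cl (pimg (g ∪ f))) :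
    ∃ y, IsPartialEmbedding (L := L) (g ∪ f ∪ {(y, y')}) := by
  obtain ⟨y, hy⟩ := forth_cl hC hH' hH (g := Prod.swap ⁻¹' g) (f := Prod.swap ⁻¹' f) (y := y')
    (by rwa [pdom_swap]) (by rwa [pimg_swap]) (hf.preimage Prod.swap_injective.injOn)
    (by rw [← preimage_union]; exact hgf.swap)
    (by rw [← preimage_union, pdom_swap]; exact hy)
  refine ⟨y, ?_⟩
  have := hy.swap
  rw [← preimage_union, swap_union_singleton] at this
  exact this

theorem cl_absorb (hC : IsQMClass C) {H : QMObj.{u} L} (hH : H ∈ C) {X Y : Set H.carrier}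
    (hXY : X ⊆ Y) (hYX : Y ⊆ H.cl X) : H.cl Y = H.cl X := by
  have hp := hC.pregeom H hH
  apply Subset.antisymm
  · rw [← hp.idem X]; exact hp.mono hYX
  · exact hp.mono hXY

/-- Extension to the closure. -/
theorem extend_cl (hC : IsQMClass C) {H H' : QMObj.{u} L} (hH : H ∈ C) (hH' : H' ∈ C)
    {g₀ : Set (H.carrier × H'.carrier)} (P : Set (H.carrier × H'.carrier) → Prop)
    (hP : ∀ p, P p → IsPartialEmbedding (L := L) p) (h₀ : P g₀)
    (hX : (pdom g₀).Countable) (hX' : (pimg g₀).Countable)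
    (forth : ∀ p, P p → ∀ y ∈ H.cl (pdom p), ∃ y', P (p ∪ {(y, y')}))
    (back : ∀ p, P p → ∀ y' ∈ H'.cl (pimg p), ∃ y, P (p ∪ {(y, y')})) :
    ∃ q, g₀ ⊆ q ∧ IsPartialEmbedding (L := L) q ∧ pdom q = H.cl (pdom g₀) ∧
      pimg q = H'.cl (pimg g₀) := by
  have pH := hC.pregeom H hH
  have pH' := hC.pregeom H' hH'
  let Q : Set (H.carrier × H'.carrier) → Prop := fun p =>
    P p ∧ g₀ ⊆ p ∧ pdom p ⊆ H.cl (pdom g₀) ∧ pimg p ⊆ H'.cl (pimg g₀)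
  have ext : ∀ p, Q p → ∀ y y', P (p ∪ {(y, y')}) →
      (y ∈ H.cl (pdom g₀) ∨ y' ∈ H'.cl (pimg g₀)) → Q (p ∪ {(y, y')}) := by
    rintro p ⟨h1, h2, h3, h4⟩ y y' h hyy
    have e1 : H.cl (pdom p) = H.cl (pdom g₀) := cl_absorb hC hH (image_mono h2 : pdom g₀ ⊆ pdom p) h3
    have e2 : H'.cl (pimg p) = H'.cl (pimg g₀) := cl_absorb hC hH' (image_mono h2 : pimg g₀ ⊆ pimg p) h4
    have tr := cl_transfer hC hH hH' (hP _ h)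
    rw [e1, e2] at tr
    have hy : y ∈ H.cl (pdom g₀) := by tauto
    have hy' : y' ∈ H'.cl (pimg g₀) := by tauto
    refine ⟨h, h2.trans subset_union_left, ?_, ?_⟩
    · rw [pdom_union]
      refine union_subset h3 ?_
      simpa [pdom] using hy
    · rw [pimg_union]
      refine union_subset h4 ?_
      simpa [pimg] using hy'
  obtain ⟨p, hp0, hpm, hpQ, hA, hB⟩ := exists_chain Q (H.cl (pdom g₀)) (H'.cl (pimg g₀))
    (cl_countable hC hH hX) (cl_countable hC hH' hX')
    (by
      intro p hp y hy
      obtain ⟨y', hy'⟩ := forth p hp.1 y (pH.mono (image_mono hp.2.1) hy)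
      exact ⟨y', ext p hp y y' hy' (Or.inl hy)⟩)
    (by
      intro p hp y' hy'
      obtain ⟨y, hy⟩ := back p hp.1 y' (pH'.mono (image_mono hp.2.1) hy')
      exact ⟨y, ext p hp y y' hy (Or.inr hy')⟩)
    g₀ ⟨h₀, Subset.rfl, pH.subset_cl _, pH'.subset_cl _⟩
  refine ⟨⋃ n, p n, ?_, ?_, ?_, ?_⟩
  · rw [← hp0]; exact subset_iUnion p 0
  · exact isPartialEmbedding_iUnion hpm fun n => hP _ (hpQ n).1
  · refine Subset.antisymm ?_ hA
    rintro _ ⟨x, hx, rfl⟩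
    obtain ⟨n, hn⟩ := mem_iUnion.1 hx
    exact (hpQ n).2.2.1 ⟨x, hn, rfl⟩
  · refine Subset.antisymm ?_ hB
    rintro _ ⟨x, hx, rfl⟩
    obtain ⟨n, hn⟩ := mem_iUnion.1 hx
    exact (hpQ n).2.2.2 ⟨x, hn, rfl⟩

theorem CCOE.countable {H : QMObj.{u} L} {G : Set H.carrier} (h : CCOE H G) : G.Countable := by
  rcases h with h | h
  · exact h.1
  · rw [h]; exact countable_empty

/-- One-step extension over a countable closed set. -/
theorem forth_all (hC : IsQMClass C) {H H' : QMObj.{u} L} (hH : H ∈ C) (hH' : H' ∈ C)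
    (hunc : Uncountable H'.carrier)
    {g f : Set (H.carrier × H'.carrier)} (hg : CCOE H (pdom g)) (hg' : CCOE H' (pimg g))
    (hf : f.Finite) (hgf : IsPartialEmbedding (L := L) (g ∪ f)) (y : H.carrier) :
    ∃ y', IsPartialEmbedding (L := L) (g ∪ f ∪ {(y, y')}) := by
  by_cases hy : y ∈ H.cl (pdom (g ∪ f))
  · exact forth_cl hC hH hH' hg hg' hf hgf hy
  have c1 : (pdom (g ∪ f)).Countable := by
    rw [pdom_union]; exact hg.countable.union (hf.image _).countable
  have c2 : (pimg (g ∪ f)).Countable := by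
    rw [pimg_union]; exact hg'.countable.union (hf.image _).countable
  obtain ⟨q, h1, h2, h3, h4⟩ := extend_cl hC hH hH' (g₀ := g ∪ f)
    (fun p => ∃ f', f'.Finite ∧ p = g ∪ f' ∧ IsPartialEmbedding (L := L) p)
    (by rintro p ⟨f', _, _, h⟩; exact h) ⟨f, hf, rfl, hgf⟩ c1 c2
    (by
      rintro p ⟨f', hf', rfl, h⟩ y hy
      obtain ⟨y', hy'⟩ := forth_cl hC hH hH' hg hg' hf' h hy
      exact ⟨y', f' ∪ {(y, y')}, hf'.union (finite_singleton _), union_assoc _ _ _, hy'⟩)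
    (by
      rintro p ⟨f', hf', rfl, h⟩ y' hy'
      obtain ⟨y, hy⟩ := back_cl hC hH hH' hg hg' hf' h hy'
      exact ⟨y, f' ∪ {(y, y')}, hf'.union (finite_singleton _), union_assoc _ _ _, hy⟩)
  have d1 := cl_countable hC hH c1
  have d2 := cl_countable hC hH' c2
  have i1 := (hC.pregeom H hH).idem (pdom (g ∪ f))
  have i2 := (hC.pregeom H' hH').idem (pimg (g ∪ f))
  obtain ⟨y', hy'⟩ : ∃ y', y' ∉ H'.cl (pimg (g ∪ f)) := by
    by_contra hcon
    push Not at hcon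
    exact not_countable_univ (α := H'.carrier) (d2.mono fun x _ => hcon x)
  refine ⟨y', (hC.homogeneity₁ H hH H' hH' q ?_ ?_ h2 y y' ?_ ?_).mono
    (union_subset_union_left _ h1)⟩
  · exact Or.inl (by rw [h3]; exact ⟨d1, i1⟩)
  · exact Or.inl (by rw [h4]; exact ⟨d2, i2⟩)
  · rw [h3, i1]; exact hy
  · rw [h4, i2]; exact hy'

theorem back_all (hC : IsQMClass C) {H H' : QMObj.{u} L} (hH : H ∈ C) (hH' : H' ∈ C)
    (hunc : Uncountable H.carrier)
    {g f : Set (H.carrier × H'.carrier)} (hg : CCOE H (pdom g)) (hg' : CCOE H' (pimg g))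
    (hf : f.Finite) (hgf : IsPartialEmbedding (L := L) (g ∪ f)) (y' : H'.carrier) :
    ∃ y, IsPartialEmbedding (L := L) (g ∪ f ∪ {(y, y')}) := by
  obtain ⟨y, hy⟩ := forth_all hC hH' hH hunc (g := Prod.swap ⁻¹' g) (f := Prod.swap ⁻¹' f)
    (by rwa [pdom_swap]) (by rwa [pimg_swap]) (hf.preimage Prod.swap_injective.injOn)
    (by rw [← preimage_union]; exact hgf.swap) y'
  refine ⟨y, ?_⟩
  have := hy.swap
  rw [← preimage_union, swap_union_singleton] at this
  exact this

/-- Finite extensions of isomorphisms of countable closed sets are σ-embeddings. -/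
theorem sigma_of_closed (hC : IsQMClass C) {H H' : QMObj.{u} L} (hH : H ∈ C) (hH' : H' ∈ C)
    (hunc : Uncountable H.carrier) (hunc' : Uncountable H'.carrier)
    {g f : Set (H.carrier × H'.carrier)} (hg : CCOE H (pdom g)) (hg' : CCOE H' (pimg g))
    (hf : f.Finite) (hgf : IsPartialEmbedding (L := L) (g ∪ f))
    {ι : Type u} (a : ι → H.carrier) (b : ι → H'.carrier) (hab : ∀ i, (a i, b i) ∈ g ∪ f) :
    SigEq L a b := by
  intro φ
  refine realize_iff_of_backForth
    (fun p => ∃ f', f'.Finite ∧ p = g ∪ f' ∧ IsPartialEmbedding (L := L) p)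
    (by rintro p ⟨f', _, _, h⟩; exact h) ?_ ?_ φ a b (g ∪ f) ⟨f, hf, rfl, hgf⟩ hab _ _
    (fun j => j.elim0)
  · rintro p ⟨f', hf', rfl, h⟩ y
    obtain ⟨y', hy'⟩ := forth_all hC hH hH' hunc' hg hg' hf' h y
    exact ⟨y', f' ∪ {(y, y')}, hf'.union (finite_singleton _), union_assoc _ _ _, hy'⟩
  · rintro p ⟨f', hf', rfl, h⟩ y'
    obtain ⟨y, hy⟩ := back_all hC hH hH' hunc hg hg' hf' h y'
    exact ⟨y, f' ∪ {(y, y')}, hf'.union (finite_singleton _), union_assoc _ _ _, hy⟩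

theorem exists_separating {M N : Type u} [L.Structure M] [L.Structure N] {ι : Type u}
    {a : ι → M} {b : ι → N} (h : ¬ SigEq L a b) :
    ∃ ψ : InfFormula L ι 0, ψ.Realize a (fun i => i.elim0) ∧
      ¬ ψ.Realize b (fun i => i.elim0) := by
  by_contra hcon
  push Not at hcon
  exact h (sigEq_of_imp hcon)

theorem isPartialEmbedding_id {M : Type u} [L.Structure M] (X : Set M) :
    IsPartialEmbedding (L := L) ((fun x => (x, x)) '' X) := by
  intro n φ _ a b hab
  have : a = b := by
    funext i
    obtain ⟨x, _, hx⟩ := hab i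
    rw [Prod.ext_iff] at hx
    exact hx.1.symm.trans hx.2
  rw [this]

/-- A formula over `F` satisfied by `y ∈ cl F` and only satisfied inside `cl F`. -/
theorem exists_cl_formula (hC : IsQMClass C) {H : QMObj.{u} L} (hH : H ∈ C)
    (hunc : Uncountable H.carrier) {F : Set H.carrier} (hF : F.Finite) {y : H.carrier}
    (hy : y ∈ H.cl F) :
    ∃ θ : InfFormula L (Option ↥F) 0,
      θ.Realize (ext1 y Subtype.val) (fun i => i.elim0) ∧
      ∀ z, θ.Realize (ext1 z Subtype.val) (fun i => i.elim0) → z ∈ H.cl F := by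
  have cF := hC.cl_finite_countable H hH F hF
  obtain ⟨z₀, hz₀⟩ : ∃ z, z ∉ H.cl F := by
    by_contra hcon
    push Not at hcon
    exact not_countable_univ (α := H.carrier) (cF.mono fun x _ => hcon x)
  have pH := hC.pregeom H hH
  have pd : ∀ X : Set H.carrier, pdom ((fun x => (x, x)) '' X) = X := by
    intro X; simp [pdom, image_image]
  have pi : ∀ X : Set H.carrier, pimg ((fun x => (x, x)) '' X) = X := by
    intro X; simp [pimg, image_image]
  have hne : ¬ SigEq L (ext1 y (Subtype.val : ↥F → H.carrier)) (ext1 z₀ Subtype.val) := by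
    intro h
    have h1 := h.isPartialEmbedding
    have h2 : IsPartialEmbedding (L := L)
        ((fun x => (x, x)) '' F ∪ {(y, z₀)} : Set (H.carrier × H.carrier)) := by
      refine h1.mono ?_
      rintro _ (⟨x, hx, rfl⟩ | rfl)
      · exact ⟨some ⟨x, hx⟩, rfl⟩
      · exact ⟨none, rfl⟩
    have h3 := cl_transfer hC hH hH h2
    rw [pd, pi] at h3
    exact hz₀ (h3.1 hy)
  obtain ⟨θ, h1, h2⟩ := exists_separating hne
  refine ⟨θ, h1, fun z hz => ?_⟩
  by_contra hzc
  have cc : CCOE H (H.cl F) := Or.inl ⟨cF, pH.idem F⟩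
  have hs := sigma_of_closed hC hH hH hunc hunc
    (g := (fun x => (x, x)) '' H.cl F) (f := {(z, z₀)})
    (by rw [pd]; exact cc) (by rw [pi]; exact cc) (finite_singleton _)
    (hC.homogeneity₁ H hH H hH _ (by rw [pd]; exact cc) (by rw [pi]; exact cc)
      (isPartialEmbedding_id _) z z₀ (by rw [pd, pH.idem]; exact hzc)
      (by rw [pi, pH.idem]; exact hz₀))
    (ext1 z (Subtype.val : ↥F → H.carrier)) (ext1 z₀ Subtype.val)
    (by
      rintro (_ | x)
      · exact Or.inr rfl
      · exact Or.inl ⟨x, pH.subset_cl _ x.2, rfl⟩)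
  exact h2 ((hs θ).1 hz)

/-- Types of elements of the closure are isolated. -/
theorem exists_isolating (hC : IsQMClass C) {H : QMObj.{u} L} (hH : H ∈ C)
    (hunc : Uncountable H.carrier) {ι : Type u} (a : ι → H.carrier) {y : H.carrier}
    (hy : y ∈ H.cl (range a)) :
    ∃ ψ : InfFormula L (Option ι) 0, ψ.Realize (ext1 y a) (fun i => i.elim0) ∧
      ∀ z, ψ.Realize (ext1 z a) (fun i => i.elim0) → SigEq L (ext1 y a) (ext1 z a) := by
  obtain ⟨F, hFX, hyF⟩ := (hC.pregeom H hH).finChar _ y hy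
  obtain ⟨θ, hθ, hθ'⟩ := exists_cl_formula hC hH hunc F.finite_toSet hyF
  have hc : ∀ x : ↥(F : Set H.carrier), ∃ i, a i = x := fun x => hFX x.2
  choose c hc using hc
  have hcomp : ∀ z, ext1 z a ∘ Option.map c = ext1 z (Subtype.val : ↥(F : Set H.carrier) → _) := by
    intro z
    funext i
    rcases i with _ | i
    · rfl
    · exact hc i
  have hsep : ∀ z, ∃ ψ : InfFormula L (Option ι) 0, ψ.Realize (ext1 y a) (fun i => i.elim0) ∧
      (ψ.Realize (ext1 z a) (fun i => i.elim0) → SigEq L (ext1 y a) (ext1 z a)) := by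
    intro z
    by_cases h : SigEq L (ext1 y a) (ext1 z a)
    · exact ⟨.not .falsum, fun h => h, fun _ => h⟩
    · obtain ⟨ψ, h1, h2⟩ := exists_separating h
      exact ⟨ψ, h1, fun h => absurd h h2⟩
  choose ψ h1 h2 using hsep
  obtain ⟨e, he⟩ := (hC.cl_finite_countable H hH F F.finite_toSet).exists_eq_range ⟨y, hyF⟩
  refine ⟨InfFormula.and (relabel (Option.map c) θ) (.iInf fun n => ψ (e n)), ?_, ?_⟩
  · rw [realize_and, realize_relabel, hcomp]
    exact ⟨hθ, fun n => h1 (e n)⟩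
  · intro z hz
    rw [realize_and, realize_relabel, hcomp] at hz
    have hzc := hθ' z hz.1
    rw [he] at hzc
    obtain ⟨n, rfl⟩ := hzc
    exact h2 _ (hz.2 n)

theorem realize_all_absorb {ι : Type u} {M : Type u} [L.Structure M]
    (φ : InfFormula L (Option ι) 0) (a : ι → M) :
    (InfFormula.all (absorb φ)).Realize a (fun i => i.elim0) ↔
      ∀ z, φ.Realize (ext1 z a) (fun i => i.elim0) := by
  refine forall_congr' fun z => ?_
  rw [← realize_absorb]
  have : (Fin.snoc (fun i : Fin 0 => i.elim0) z : Fin 1 → M) = Fin.cons z (fun i => i.elim0) := by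
    funext i
    fin_cases i
    rfl
  rw [← this]

theorem sigma_extend (hC : IsQMClass C) {H H' : QMObj.{u} L} (hH : H ∈ C)
    (hunc : Uncountable H.carrier) {ι : Type u} {a : ι → H.carrier} {b : ι → H'.carrier}
    (hab : SigEq L a b) {y : H.carrier} (hy : y ∈ H.cl (range a)) :
    ∃ y', SigEq L (ext1 y a) (ext1 y' b) := by
  obtain ⟨ψ, h1, h2⟩ := exists_isolating hC hH hunc a hy
  have hex : ∃ y', ψ.Realize (ext1 y' b) (fun i => i.elim0) := by
    by_contra hcon
    push Not at hcon
    have := (hab (.all (absorb (.not ψ)))).2 ((realize_all_absorb _ _).2 hcon)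
    exact (realize_all_absorb _ _).1 this y h1
  obtain ⟨y', hy'⟩ := hex
  refine ⟨y', sigEq_of_imp fun φ hφ => ?_⟩
  have hall : ∀ z, (InfFormula.not (InfFormula.and ψ (.not φ))).Realize (ext1 z a)
      (fun i => i.elim0) := by
    intro z hz
    rw [realize_and] at hz
    exact hz.2 ((h2 z hz.1 φ).1 hφ)
  have := (realize_all_absorb _ _).1 ((hab _).1 ((realize_all_absorb _ _).2 hall)) y'
  by_contra hφ'
  exact this ((realize_and _ _ _ _).2 ⟨hy', hφ'⟩)

theorem sigma_forth (hC : IsQMClass C) {H H' : QMObj.{u} L} (hH : H ∈ C)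
    (hunc : Uncountable H.carrier) {p : Set (H.carrier × H'.carrier)}
    (hp : SigEq L (fun i : ↥p => i.1.1) (fun i : ↥p => i.1.2)) {y : H.carrier}
    (hy : y ∈ H.cl (pdom p)) :
    ∃ y', SigEq L (fun i : ↥(p ∪ {(y, y')}) => i.1.1) (fun i : ↥(p ∪ {(y, y')}) => i.1.2) := by
  have hr : range (fun i : ↥p => i.1.1) = pdom p := by
    ext x; simp [pdom]
  obtain ⟨y', hy'⟩ := sigma_extend hC hH hunc hp (y := y) (by rw [hr]; exact hy)
  refine ⟨y', ?_⟩
  have hm : ∀ i : ↥(p ∪ {(y, y')}), ∃ j : Option ↥p,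
      ext1 y (fun i : ↥p => i.1.1) j = i.1.1 ∧ ext1 y' (fun i : ↥p => i.1.2) j = i.1.2 := by
    rintro ⟨x, hx | rfl⟩
    · exact ⟨some ⟨x, hx⟩, rfl, rfl⟩
    · exact ⟨none, rfl, rfl⟩
  choose m hm1 hm2 using hm
  have := hy'.comp m
  convert this using 1
  · funext i; exact (hm1 i).symm
  · funext i; exact (hm2 i).symm

theorem sigma_swap {M N : Type u} [L.Structure M] [L.Structure N] {p : Set (M × N)}
    (hp : SigEq L (fun i : ↥p => i.1.1) (fun i : ↥p => i.1.2)) :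
    SigEq L (fun i : ↥(Prod.swap ⁻¹' p) => i.1.1) (fun i : ↥(Prod.swap ⁻¹' p) => i.1.2) :=
  hp.symm.comp (fun i : ↥(Prod.swap ⁻¹' p) => (⟨i.1.swap, i.2⟩ : ↥p))

theorem sigma_back (hC : IsQMClass C) {H H' : QMObj.{u} L} (hH' : H' ∈ C)
    (hunc : Uncountable H'.carrier) {p : Set (H.carrier × H'.carrier)}
    (hp : SigEq L (fun i : ↥p => i.1.1) (fun i : ↥p => i.1.2)) {y' : H'.carrier}
    (hy : y' ∈ H'.cl (pimg p)) :
    ∃ y, SigEq L (fun i : ↥(p ∪ {(y, y')}) => i.1.1) (fun i : ↥(p ∪ {(y, y')}) => i.1.2) := by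
  obtain ⟨y, hy⟩ := sigma_forth hC hH' hunc (sigma_swap hp) (y := y') (by rwa [pdom_swap])
  refine ⟨y, ?_⟩
  have := sigma_swap hy
  rw [swap_union_singleton] at this
  exact this

end qm

/-- A partial σ-embedding `g` between uncountable `H, H' ∈ C` with
countable domain `X` and image `X'` extends to a partial σ-embedding `ĝ` with
`dom ĝ = cl(X)` and `img ĝ = cl(X')`; in particular `ĝ` is an isomorphism (a bijective
partial embedding) of `cl(X)` onto `cl(X')`. -/
theorem statement_10 {L : FirstOrder.Language.{v, w}} (C : Set (QMObj.{u} L))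
    (hC : IsQMClass C) (H : QMObj.{u} L) (hH : H ∈ C) (H' : QMObj.{u} L) (hH' : H' ∈ C)
    (huncH : Uncountable H.carrier) (huncH' : Uncountable H'.carrier)
    (g : Set (H.carrier × H'.carrier))
    (hg : IsSigmaEmbedding (L := L) g)
    (hX : (pdom g).Countable) (hX' : (pimg g).Countable) :
    ∃ ghat : Set (H.carrier × H'.carrier), g ⊆ ghat ∧
      IsSigmaEmbedding (L := L) ghat ∧
      pdom ghat = H.cl (pdom g) ∧ pimg ghat = H'.cl (pimg g) := by

  have hg1 := (isSigmaEmbedding_iff g).1 hg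
  obtain ⟨q, h1, h2, h3, h4⟩ := extend_cl hC hH hH' (g₀ := g)
    (fun p => SigEq L (fun i : ↥p => i.1.1) (fun i : ↥p => i.1.2))
    (fun p hp => ((isSigmaEmbedding_iff p).2 hp).1) hg1 hX hX'
    (fun p hp y hy => sigma_forth hC hH huncH hp hy)
    (fun p hp y hy => sigma_back hC hH' huncH' hp hy)
  refine ⟨q, h1, (isSigmaEmbedding_iff q).2 ?_, h3, h4⟩
  refine sigma_of_closed hC hH hH' huncH huncH' (g := q) (f := ∅) ?_ ?_ finite_empty
    (by rwa [union_empty]) _ _ (fun i => Or.inl i.2)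
  · exact Or.inl (by
      rw [h3]; exact ⟨cl_countable hC hH hX, (hC.pregeom H hH).idem _⟩)
  · exact Or.inl (by
      rw [h4]; exact ⟨cl_countable hC hH' hX', (hC.pregeom H' hH').idem _⟩)

end QM
end
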